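/- For every y ∈ (−1, −1/2) and every x ≥ −2(y+1)^2/(1+2y) (note this lower bound is positive), the expression x·(ψ'(x+y+1) − (x+2y+2)/(2(y+1)(x+y+1)^2)) is negative, where ψ' is the derivative of the digamma function (the trigamma function). -/

import Mathlib

open Real

/-!
Put `a = y + 1 ∈ (0, 1/2)` and `t = x + a`. The hypothesis on `x` says exactly `a * (1 + 2 t) ≤ t`,
which gives `(t + a) / (2 a t²) ≥ 1/t² + 1/t`. So it is enough to show `ψ'(t) < 1/t² + 1/t`
for `t > 0`.

This bound is obtained without the series for `ψ'`, by estimating the increments of `ψ`.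
Since `log Γ` is convex, `ψ` is increasing on `(0, ∞)`; together with `ψ(t + 1) = ψ(t) + 1/t` this
shows `ψ(t + d) - ψ(t) ≤ 1/t` for `d ≤ 1`. The functional equation also shows that
`ψ(t + d) - ψ(t) - d (1/t² + 1/t)` does not decrease under `t ↦ t + 1`; being at most `1/(t + n)`
at `t + n`, it is nonpositive (`digamma_increment_le`). One more use of the functional equation
makes the constant strictly smaller than `1/t² + 1/t`.
-/

/-- The digamma function `ψ = Γ′/Γ`. -/
noncomputable def digamma (x : ℝ) : ℝ := deriv Real.Gamma x / Real.Gamma x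

lemma digamma_add_one {t : ℝ} (ht : 0 < t) : digamma (t + 1) = digamma t + 1 / t := by
  have hG : Real.Gamma t ≠ 0 := (Real.Gamma_pos_of_pos ht).ne'
  have hd : DifferentiableAt ℝ Real.Gamma t :=
    Real.differentiableAt_Gamma fun m => by
      have : (0 : ℝ) ≤ m := m.cast_nonneg
      linarith
  have h1 : deriv Real.Gamma (t + 1) = Real.Gamma t + t * deriv Real.Gamma t := by
    rw [← deriv_comp_add_const]
    have he : (fun s : ℝ => Real.Gamma (s + 1)) =ᶠ[nhds t] fun s => s * Real.Gamma s := by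
      filter_upwards [eventually_ne_nhds ht.ne'] with s hs using Real.Gamma_add_one hs
    rw [he.deriv_eq]
    have hp := ((hasDerivAt_id t).mul hd.hasDerivAt).deriv
    simp only [id, one_mul] at hp
    exact hp
  unfold digamma
  rw [h1, Real.Gamma_add_one ht.ne']
  field_simp
  ring

lemma digamma_mono {s t : ℝ} (hs : 0 < s) (hst : s ≤ t) : digamma s ≤ digamma t := by
  have hd : ∀ u ∈ Set.Ioi (0 : ℝ), DifferentiableAt ℝ Real.Gamma u := fun u hu =>
    Real.differentiableAt_Gamma fun m => by
      have : (0 : ℝ) ≤ m := m.cast_nonneg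
      have : 0 < u := hu
      linarith
  have hlog : ∀ u ∈ Set.Ioi (0 : ℝ), HasDerivAt (Real.log ∘ Real.Gamma) (digamma u) u :=
    fun u hu => (hd u hu).hasDerivAt.log (Real.Gamma_pos_of_pos hu).ne'
  have hm := Real.convexOn_log_Gamma.monotoneOn_deriv
    (fun u hu => (hlog u hu).differentiableAt)
  have h := hm hs (hs.trans_le hst : t ∈ Set.Ioi (0 : ℝ)) hst
  rwa [(hlog s hs).deriv, (hlog t (hs.trans_le hst)).deriv] at h

/-- One step of the iteration: `1/(t(t+d)) ≤ 1/t²` isolates the first term of the series. -/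
lemma digamma_increment_step {t d : ℝ} (ht : 0 < t) (hd : 0 ≤ d) :
    digamma (t + d) - digamma t ≤
      d * (1 / t ^ 2) + (digamma (t + 1 + d) - digamma (t + 1)) := by
  have h1 := digamma_add_one ht
  have h2 := digamma_add_one (add_pos_of_pos_of_nonneg ht hd)
  rw [show t + d + 1 = t + 1 + d by ring] at h2
  have h3 : 1 / t - 1 / (t + d) ≤ d * (1 / t ^ 2) := by
    have : d * (1 / t ^ 2) - (1 / t - 1 / (t + d)) = d ^ 2 / (t ^ 2 * (t + d)) := by
      have : t + d ≠ 0 := by positivity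
      field_simp
      ring
    have : 0 ≤ d ^ 2 / (t ^ 2 * (t + d)) := by positivity
    linarith
  linarith

lemma inv_sq_lt_sub {t : ℝ} (ht : 0 < t) : 1 / (t + 1) ^ 2 + 1 / (t + 1) < 1 / t := by
  have : 1 / t - (1 / (t + 1) ^ 2 + 1 / (t + 1)) = 1 / (t * (t + 1) ^ 2) := by
    field_simp
    ring
  have : 0 < 1 / (t * (t + 1) ^ 2) := by positivity
  linarith

/-- The term `1 / (t + n)` bounds the tail of the iteration and vanishes as `n → ∞`. -/
lemma digamma_increment_le_add (n : ℕ) {t d : ℝ} (ht : 0 < t) (hd : 0 ≤ d) (hd1 : d ≤ 1) :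
    digamma (t + d) - digamma t ≤ d * (1 / t ^ 2 + 1 / t) + 1 / (t + n) := by
  induction n generalizing t with
  | zero =>
    have h1 := digamma_add_one ht
    have h2 := digamma_mono (add_pos_of_pos_of_nonneg ht hd) (by linarith : t + d ≤ t + 1)
    have : 0 ≤ d * (1 / t ^ 2 + 1 / t) := by positivity
    simp only [Nat.cast_zero, add_zero]
    linarith
  | succ n ih =>
    have h1 := digamma_increment_step ht hd
    have h2 := ih (t := t + 1) (by linarith)
    have h3 := mul_le_mul_of_nonneg_left (inv_sq_lt_sub ht).le hd
    rw [show t + 1 + (n : ℝ) = t + ((n + 1 : ℕ) : ℝ) by push_cast; ring] at h2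
    linarith

lemma digamma_increment_le {t d : ℝ} (ht : 0 < t) (hd : 0 ≤ d) (hd1 : d ≤ 1) :
    digamma (t + d) - digamma t ≤ d * (1 / t ^ 2 + 1 / t) := by
  have hlim : Filter.Tendsto (fun n : ℕ => d * (1 / t ^ 2 + 1 / t) + 1 / (t + n))
      Filter.atTop (nhds (d * (1 / t ^ 2 + 1 / t) + 0)) := by
    refine tendsto_const_nhds.add ?_
    simp only [one_div]
    exact tendsto_inv_atTop_zero.comp
      (Filter.tendsto_atTop_add_const_left _ t tendsto_natCast_atTop_atTop)
  rw [add_zero] at hlim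
  exact ge_of_tendsto' hlim fun n => digamma_increment_le_add n ht hd hd1

/-- The trigamma bound `ψ'(t) < 1/t² + 1/t`. Differentiability of `ψ` is not needed: where it
fails, `deriv` takes the value `0` and the bound is trivial. -/
lemma deriv_digamma_lt {t : ℝ} (ht : 0 < t) : deriv digamma t < 1 / t ^ 2 + 1 / t := by
  by_cases hdiff : DifferentiableAt ℝ digamma t
  · have hle : deriv digamma t ≤ 1 / t ^ 2 + (1 / (t + 1) ^ 2 + 1 / (t + 1)) := by
      refine le_of_tendsto hdiff.hasDerivAt.tendsto_slope_zero_right ?_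
      filter_upwards [Ioc_mem_nhdsGT (zero_lt_one' ℝ)] with d hd
      have h1 := digamma_increment_step ht hd.1.le
      have h2 := digamma_increment_le (t := t + 1) (by linarith) hd.1.le hd.2
      rw [smul_eq_mul, inv_mul_le_iff₀ hd.1]
      linarith
    linarith [inv_sq_lt_sub ht]
  · rw [deriv_zero_of_not_differentiableAt hdiff]
    positivity

theorem stmt_19 (y : ℝ) (hy : y ∈ Set.Ioo (-1 : ℝ) (-1/2))
    (x : ℝ) (hx : -2 * (y + 1) ^ 2 / (1 + 2 * y) ≤ x) :
    x * (deriv digamma (x + y + 1) -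
      (x + 2 * y + 2) / (2 * (y + 1) * (x + y + 1) ^ 2)) < 0 := by
  obtain ⟨hy1, hy2⟩ := hy
  have ha : 0 < y + 1 := by linarith
  have hneg : 1 + 2 * y < 0 := by linarith
  have hx0 : 0 < x := by
    refine lt_of_lt_of_le (div_pos_of_neg_of_neg ?_ hneg) hx
    nlinarith [pow_pos ha 2]
  rw [div_le_iff_of_neg hneg] at hx
  have ht : 0 < x + y + 1 := by linarith
  refine mul_neg_of_pos_of_neg hx0 (sub_neg.2 ((deriv_digamma_lt ht).trans_le ?_))
  rw [show 1 / (x + y + 1) ^ 2 + 1 / (x + y + 1) = (x + y + 2) / (x + y + 1) ^ 2 by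
    field_simp; ring, div_le_div_iff₀ (by positivity) (by positivity)]
  -- After cancelling `t²` this is the hypothesis on `x`.
  have key : (x + y + 2) * (2 * (y + 1)) ≤ x + 2 * y + 2 := by nlinarith
  nlinarith [mul_le_mul_of_nonneg_right key (sq_nonneg (x + y + 1))]
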